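/- Let D_1, D_2, D_3, D_4 be the four chord diagrams of order n obtained from a common configuration as described. For every set A of chords with c ∈ A and c' ∈ A (regarding A as a set of chords of each D_i), the genera of the corresponding partial duals satisfy g_A(D_1) = g_A(D_4) and g_A(D_2) = g_A(D_3). -/

import Mathlib

/-- Number of cycles (orbits, counting fixed points) of a self-map:
the number of connected components of its functional graph. For a permutation
this is the number of cycles, counting fixed points. -/
noncomputable def cycles {α : Type*} (f : α → α) : ℕ :=
  Nat.card (Quot fun i j => f i = j)

-- `restrictTo σ A` agrees with `σ` on `A` and fixes everything else.
-- If `A` is the set of endpoints of a set of chords of `σ`, this is `σ_A`.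
open Classical in
noncomputable def restrictTo {α : Type*} (f : α → α) (A : Set α) : α → α :=
  fun i => if i ∈ A then f i else i

/-- The rotation `i ↦ i + 1` of the `2n` points of a chord diagram. -/
def rot (n : ℕ) : ZMod (2 * n) → ZMod (2 * n) := fun i => i + 1

/-- Genus of the partial dual of the chord diagram `σ` relative to the set of
chords whose endpoint set is the (`σ`-invariant) set `A`. -/
noncomputable def pdGenus (n : ℕ) (σ : ZMod (2 * n) → ZMod (2 * n))
    (A : Set (ZMod (2 * n))) : ℕ :=
  (n + 2 - cycles (rot n ∘ restrictTo σ A) - cycles (rot n ∘ restrictTo σ Aᶜ)) / 2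

/-- Genus of the one-vertex ribbon graph of the chord diagram `σ`. -/
noncomputable def genus (n : ℕ) (σ : ZMod (2 * n) → ZMod (2 * n)) : ℕ :=
  (n + 1 - cycles (rot n ∘ σ)) / 2

/-- The partial-dual genus polynomial `∂Γ_σ(z) = Σ_A z^{g_A(σ)}`, the sum being
over all sets `A` of chords of `σ` (encoded as `σ`-invariant subsets of the
`2n` points). -/
noncomputable def pdPoly (n : ℕ) (σ : ZMod (2 * n) → ZMod (2 * n)) : Polynomial ℤ :=
  if h : n = 0 then 1 else
    haveI : NeZero (2 * n) := ⟨by omega⟩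
    ∑ A ∈ Finset.univ.filter (fun A : Finset (ZMod (2 * n)) => ∀ i ∈ A, σ i ∈ A),
      Polynomial.X ^ pdGenus n σ (↑A : Set (ZMod (2 * n)))

/-- `φ : ZMod (2n-1) → ZMod (2n)` is the cyclic-order-preserving identification of
the `2n-1` configuration points with the complement of the inserted point `x`:
it avoids `x` and each step advances by one position on the circle, skipping `x`. -/
def IsInsertion {m N : ℕ} (φ : ZMod m → ZMod N) (x : ZMod N) : Prop :=
  φ 0 ≠ x ∧ ∀ j, φ (j + 1) = if φ j + 1 = x then φ j + 2 else φ j + 1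

/-- A configuration of `2n-1` marked points on the circle: a distinguished chord
`c = {p, q}`, a distinguished unpaired point `u`, and a fixed-point-free pairing
of the remaining `2n-4` points into background chords; all encoded by the
involution `τ` whose unique fixed point is `u` and with `τ p = q`. -/
def IsConfig (n : ℕ) (τ : ZMod (2 * n - 1) → ZMod (2 * n - 1))
    (p q u : ZMod (2 * n - 1)) : Prop :=
  Function.Involutive τ ∧ τ p = q ∧ p ≠ q ∧ τ u = u ∧ ∀ j, τ j = j → j = u

/-- `D` is the chord diagram of order `n` obtained from the configuration `τ`
by inserting the extra point `x` (via the order-preserving identification `φ`)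
together with the new chord `c' = {x, u}`; all other chords are unchanged. -/
def IsInsertedDiagram (n : ℕ) (τ : ZMod (2 * n - 1) → ZMod (2 * n - 1))
    (u : ZMod (2 * n - 1)) (φ : ZMod (2 * n - 1) → ZMod (2 * n)) (x : ZMod (2 * n))
    (D : ZMod (2 * n) → ZMod (2 * n)) : Prop :=
  IsInsertion φ x ∧ (∀ j, j ≠ u → D (φ j) = φ (τ j)) ∧ D (φ u) = x ∧ D x = φ u

/-!
Write `0` for the inserted point, `r` for the rotation of the configuration and `t` for the
restriction of `τ` to `B`. Both the rotation of the enlarged circle and the enlarged involution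
arise by inserting `0` into a cycle: they are `r (0 w)`, with `w` the predecessor of `0`, and
`t (0 u)`. If `0` stands immediately before `p`, the boundary permutation `(0 p) r t (0 u)` is
conjugate to `r t (0 u)(0 p) = r t (p u)(0 u)`; if it stands immediately after `t p`, the boundary
permutation is `r (0 t(p)) t (0 u) = r t (0 p)(0 u) = r t (p u)(0 p)`. Both are the permutation
`r t (p u)` with `0` inserted into one of its cycles, so they have equally many cycles. On the
complementary chords `0` is isolated, and its position does not matter at all.
-/

open Function

section Orbits

variable {α β : Type*} {f : α → α} {g : β → β}

/-- The connected component of `a` in the functional graph of `f`: the elements counted by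
`cycles f`, which for a permutation are its cycles. -/
def component (f : α → α) (a : α) : Quot fun i j => f i = j :=
  Quot.mk _ a

theorem component_apply (f : α → α) (a : α) : component f (f a) = component f a :=
  (Quot.sound (r := fun i j => f i = j) rfl).symm

theorem cycles_eq_of_component_eq (h : α → β) (k : β → α)
    (h_apply : ∀ a, component g (h (f a)) = component g (h a))
    (k_apply : ∀ b, component f (k (g b)) = component f (k b))
    (k_h : ∀ a, component f (k (h a)) = component f a)
    (h_k : ∀ b, component g (h (k b)) = component g b) :
    cycles f = cycles g :=
  Nat.card_congr
    { toFun := Quot.lift (component g ∘ h) (by rintro a _ rfl; exact (h_apply a).symm)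
      invFun := Quot.lift (component f ∘ k) (by rintro b _ rfl; exact (k_apply b).symm)
      left_inv := by rintro ⟨a⟩; exact k_h a
      right_inv := by rintro ⟨b⟩; exact h_k b }

theorem cycles_comp_comm (h : α → β) (k : β → α) : cycles (k ∘ h) = cycles (h ∘ k) :=
  cycles_eq_of_component_eq h k (fun a => component_apply (h ∘ k) (h a))
    (fun b => component_apply (k ∘ h) (k b)) (component_apply (k ∘ h)) (component_apply (h ∘ k))

theorem cycles_eq_of_semiconj {e : α → β} (he : Bijective e) (h : Semiconj e f g) :
    cycles f = cycles g := by
  obtain ⟨e', left_inv, right_inv⟩ := bijective_iff_has_inverse.mp he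
  calc cycles f = cycles (e' ∘ (e ∘ f)) := by rw [← comp_assoc, left_inv.comp_eq_id, id_comp]
    _ = cycles ((e ∘ f) ∘ e') := cycles_comp_comm _ _
    _ = cycles g := by rw [h.comp_eq, comp_assoc, right_inv.comp_eq_id, comp_id]

end Orbits

section Splice

variable {α : Type*} [DecidableEq α]

/-- The self-map `f` with the new point `none` inserted into the orbit of `w`, immediately after
`w`: it sends `w ↦ none ↦ f w`. It is written as a product with a transposition so that the calculus
of transpositions applies. -/
def splice (f : α → α) (w : α) : Option α → Option α :=
  Option.map f ∘ Equiv.swap none (some w)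

@[simp]
theorem splice_none (f : α → α) (w : α) : splice f w none = some (f w) := by
  simp [splice]

@[simp]
theorem splice_some_self (f : α → α) (w : α) : splice f w (some w) = none := by
  simp [splice]

theorem splice_some_of_ne (f : α → α) {w a : α} (h : a ≠ w) :
    splice f w (some a) = some (f a) := by
  simp [splice, Equiv.swap_apply_of_ne_of_ne, h]

theorem map_comp_splice (f g : α → α) (w : α) :
    Option.map g ∘ splice f w = splice (g ∘ f) w := by
  rw [splice, ← comp_assoc, Option.map_comp_map, splice]

theorem cycles_splice (f : α → α) (w : α) : cycles (splice f w) = cycles f := by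
  have component_none : component (splice f w) none = component (splice f w) (some w) := by
    rw [← component_apply _ (some w), splice_some_self]
  refine (cycles_eq_of_component_eq some (Option.elim' w id) ?_ ?_ (fun _ => rfl) ?_).symm
  · intro a
    obtain rfl | ha := eq_or_ne a w
    · rw [← splice_none, component_apply, component_none]
    · rw [← splice_some_of_ne f ha, component_apply]
  · rintro (_ | a)
    · simpa using component_apply f w
    · obtain rfl | ha := eq_or_ne a w
      · simp
      · simpa [splice_some_of_ne f ha] using component_apply f a
  · rintro (_ | a)
    · exact component_none.symm
    · rfl

theorem cycles_splice_comp_map (r s : α → α) (w : α) :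
    cycles (splice r w ∘ Option.map s) = cycles (r ∘ s) := by
  rw [cycles_comp_comm, map_comp_splice, cycles_splice, cycles_comp_comm]

theorem splice_eq_swap_comp_map {f : α → α} (hf : Injective f) (w : α) :
    splice f w = Equiv.swap none (some (f w)) ∘ Option.map f :=
  ((Option.map_injective hf).swap_comp none (some w)).symm

theorem splice_apply_comp_map (r : α → α) {t : α → α} (ht : Injective t) (p : α) :
    splice r (t p) ∘ Option.map t = splice (r ∘ t) p := by
  rw [splice, comp_assoc, ← splice_eq_swap_comp_map ht, map_comp_splice]

theorem splice_comp_swap_none (f : α → α) {p u : α} (hpu : p ≠ u) :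
    splice f u ∘ Equiv.swap none (some p) = splice (f ∘ Equiv.swap p u) u := by
  funext o
  rcases o with _ | a
  · simp [splice_some_of_ne f hpu]
  · obtain rfl | hap := eq_or_ne a p
    · simp [splice_some_of_ne _ hpu]
    · obtain rfl | hau := eq_or_ne a u
      · simp [Equiv.swap_apply_of_ne_of_ne, hap]
      · simp [Equiv.swap_apply_of_ne_of_ne, splice_some_of_ne, hap, hau]

theorem cycles_splice_comp_splice_of_apply_eq {r : α → α} (hr : Injective r) (t : α → α)
    {w p u : α} (hw : r w = p) (hpu : p ≠ u) :
    cycles (splice r w ∘ splice t u) = cycles (r ∘ t ∘ Equiv.swap p u) := by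
  calc cycles (splice r w ∘ splice t u)
      = cycles (Equiv.swap none (some p) ∘ splice (r ∘ t) u) := by
        rw [splice_eq_swap_comp_map hr, hw, comp_assoc, map_comp_splice]
    _ = cycles (splice (r ∘ t) u ∘ Equiv.swap none (some p)) := cycles_comp_comm _ _
    _ = cycles (r ∘ t ∘ Equiv.swap p u) := by
        rw [splice_comp_swap_none _ hpu, cycles_splice, comp_assoc]

theorem cycles_splice_apply_comp_splice (r : α → α) {t : α → α} (ht : Injective t)
    {p u : α} (hpu : p ≠ u) :
    cycles (splice r (t p) ∘ splice t u) = cycles (r ∘ t ∘ Equiv.swap p u) := by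
  calc cycles (splice r (t p) ∘ splice t u)
      = cycles (splice (r ∘ t) p ∘ Equiv.swap none (some u)) := by
        rw [splice, splice, ← comp_assoc, ← splice, splice_apply_comp_map r ht]
    _ = cycles (r ∘ t ∘ Equiv.swap p u) := by
        rw [splice_comp_swap_none _ hpu.symm, cycles_splice, comp_assoc, Equiv.swap_comm]

end Splice

section RestrictTo

variable {α β : Type*} {f : α → α} {A : Set α}

theorem restrictTo_of_mem {a : α} (ha : a ∈ A) : restrictTo f A a = f a :=
  if_pos ha

theorem restrictTo_of_notMem {a : α} (ha : a ∉ A) : restrictTo f A a = a :=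
  if_neg ha

theorem involutive_restrictTo (hf : Involutive f) (hA : ∀ a ∈ A, f a ∈ A) :
    Involutive (restrictTo f A) := by
  intro a
  by_cases ha : a ∈ A
  · rw [restrictTo_of_mem ha, restrictTo_of_mem (hA a ha), hf a]
  · rw [restrictTo_of_notMem ha, restrictTo_of_notMem ha]

theorem semiconj_restrictTo_image {e : α → β} {g : β → β} (he : Injective e)
    (h : Semiconj e f g) (A : Set α) : Semiconj e (restrictTo f A) (restrictTo g (e '' A)) := by
  intro a
  by_cases ha : a ∈ A
  · rw [restrictTo_of_mem ha, restrictTo_of_mem (Set.mem_image_of_mem e ha), h a]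
  · rw [restrictTo_of_notMem ha, restrictTo_of_notMem (he.mem_set_image.not.mpr ha)]

theorem restrictTo_splice [DecidableEq α] (f : α → α) {u : α} (hu : u ∈ A) :
    restrictTo (splice f u) (some '' A ∪ {none}) = splice (restrictTo f A) u := by
  funext o
  rcases o with _ | a
  · simp [restrictTo, hu]
  · obtain rfl | hau := eq_or_ne a u
    · simp [restrictTo, hu]
    · by_cases ha : a ∈ A <;> simp [restrictTo, splice_some_of_ne, hau, ha]

theorem restrictTo_splice_compl [DecidableEq α] (f : α → α) {u : α} (hu : u ∈ A) :
    restrictTo (splice f u) (some '' A ∪ {none})ᶜ = Option.map (restrictTo f Aᶜ) := by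
  funext o
  rcases o with _ | a
  · simp [restrictTo]
  · by_cases ha : a ∈ A
    · simp [restrictTo, ha]
    · have hau : a ≠ u := by rintro rfl; exact ha hu
      simp [restrictTo, splice_some_of_ne, hau, ha]

end RestrictTo

section Insertion

theorem zmod_induction_add_one {N : ℕ} [NeZero N] {P : ZMod N → Prop} (a : ZMod N) (base : P a)
    (step : ∀ j, P j → P (j + 1)) (b : ZMod N) : P b := by
  have add_natCast (k : ℕ) : P (a + k) := by
    induction k with
    | zero => simpa using base
    | succ k ih => simpa [add_assoc] using step _ ih
  obtain ⟨k, hk⟩ := ZMod.natCast_zmod_surjective (b - a)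
  simpa [hk] using add_natCast k

variable {m N : ℕ} {φ : ZMod m → ZMod N} {x : ZMod N} {w : ZMod m}

namespace IsInsertion

theorem apply_add_one_of_eq (h : IsInsertion φ x) (hw : φ w + 1 = x) : φ (w + 1) = x + 1 := by
  rw [h.2, if_pos hw, ← hw, add_assoc, one_add_one_eq_two]

theorem apply_add_one_of_ne (h : IsInsertion φ x) (hw : φ w + 1 ≠ x) : φ (w + 1) = φ w + 1 := by
  rw [h.2, if_neg hw]

theorem apply_ne [NeZero m] [Nontrivial (ZMod N)] (h : IsInsertion φ x) (j : ZMod m) :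
    φ j ≠ x := by
  refine zmod_induction_add_one (P := fun j => φ j ≠ x) 0 h.1 (fun j _ => ?_) j
  by_cases hj : φ j + 1 = x
  · simp [h.apply_add_one_of_eq hj]
  · rwa [h.apply_add_one_of_ne hj]

theorem apply_sub_one_add_one [NeZero m] [Nontrivial (ZMod N)] (h : IsInsertion φ x) {p : ZMod m}
    (hx : x + 1 = φ p) : φ (p - 1) + 1 = x := by
  by_contra hne
  have hp := h.apply_add_one_of_ne hne
  rw [sub_add_cancel, ← hx] at hp
  exact h.apply_ne _ (add_right_cancel hp).symm

theorem surjective_elim' [NeZero N] (h : IsInsertion φ x) (hw : φ w + 1 = x) :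
    Surjective (Option.elim' x φ) := by
  refine zmod_induction_add_one x ⟨none, rfl⟩ ?_
  rintro _ ⟨_ | j, rfl⟩
  · exact ⟨some (w + 1), h.apply_add_one_of_eq hw⟩
  · by_cases hj : φ j + 1 = x
    · exact ⟨none, hj.symm⟩
    · exact ⟨some (j + 1), h.apply_add_one_of_ne hj⟩

theorem bijective_elim' [NeZero m] (hN : N = m + 1) (h : IsInsertion φ x) (hw : φ w + 1 = x) :
    Bijective (Option.elim' x φ) := by
  have : NeZero N := ⟨by lia⟩
  refine (Fintype.bijective_iff_surjective_and_card _).mpr ⟨h.surjective_elim' hw, ?_⟩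
  rw [Fintype.card_option, ZMod.card, ZMod.card, hN]

theorem semiconj_add_one (h : IsInsertion φ x) (hφ : Injective φ) (hw : φ w + 1 = x) :
    Semiconj (Option.elim' x φ) (splice (· + 1) w) (· + 1) := by
  rintro (_ | j)
  · simpa using h.apply_add_one_of_eq hw
  · obtain rfl | hj := eq_or_ne j w
    · simpa using hw.symm
    · have hjx : φ j + 1 ≠ x := fun hjx => hj (hφ (add_right_cancel (hjx.trans hw.symm)))
      simpa [splice_some_of_ne _ hj] using h.apply_add_one_of_ne hjx

end IsInsertion

end Insertion

namespace IsInsertedDiagram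

variable {n : ℕ} {τ : ZMod (2 * n - 1) → ZMod (2 * n - 1)} {p u w : ZMod (2 * n - 1)}
  {φ : ZMod (2 * n - 1) → ZMod (2 * n)} {x : ZMod (2 * n)} {D : ZMod (2 * n) → ZMod (2 * n)}
  {B : Set (ZMod (2 * n - 1))}

theorem semiconj (h : IsInsertedDiagram n τ u φ x D) (hu : τ u = u) :
    Semiconj (Option.elim' x φ) (splice τ u) D := by
  obtain ⟨-, D_apply, D_u, D_x⟩ := h
  rintro (_ | j)
  · simp [hu, D_x]
  · obtain rfl | hj := eq_or_ne j u
    · simp [D_u]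
    · simp [splice_some_of_ne _ hj, D_apply j hj]

theorem pdGenus_eq (hn : 0 < n) (h : IsInsertedDiagram n τ u φ x D) (hu : τ u = u)
    (hw : φ w + 1 = x) (huB : u ∈ B) :
    pdGenus n D (φ '' B ∪ {x}) =
      (n + 2 - cycles (splice (· + 1) w ∘ splice (restrictTo τ B) u)
        - cycles ((· + 1) ∘ restrictTo τ Bᶜ)) / 2 := by
  have : NeZero (2 * n - 1) := ⟨by lia⟩
  have bij : Bijective (Option.elim' x φ) := h.1.bijective_elim' (by lia) hw
  have rot_semiconj : Semiconj (Option.elim' x φ) (splice (· + 1) w) (rot n) :=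
    h.1.semiconj_add_one (bij.injective.comp (Option.some_injective _)) hw
  have restrict_semiconj := semiconj_restrictTo_image bij.injective (h.semiconj hu)
  have image_eq : Option.elim' x φ '' (some '' B ∪ {none}) = φ '' B ∪ {x} := by
    simp [Set.image_insert_eq, Set.image_image]
  have cycles_eq : cycles (splice (· + 1) w ∘ splice (restrictTo τ B) u) =
      cycles (rot n ∘ restrictTo D (φ '' B ∪ {x})) := by
    rw [← restrictTo_splice τ huB, ← image_eq]
    exact cycles_eq_of_semiconj bij (rot_semiconj.comp_right (restrict_semiconj _))
  have cycles_compl_eq : cycles ((· + 1) ∘ restrictTo τ Bᶜ) =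
      cycles (rot n ∘ restrictTo D (φ '' B ∪ {x})ᶜ) := by
    rw [← cycles_splice_comp_map _ _ w, ← restrictTo_splice_compl τ huB, ← image_eq,
      ← Set.image_compl_eq bij]
    exact cycles_eq_of_semiconj bij (rot_semiconj.comp_right (restrict_semiconj _))
  rw [pdGenus, cycles_eq, cycles_compl_eq]

theorem pdGenus_eq_of_add_one_eq (hn : 0 < n) (h : IsInsertedDiagram n τ u φ x D) (hu : τ u = u)
    (hpu : p ≠ u) (hx : x + 1 = φ p) (huB : u ∈ B) :
    pdGenus n D (φ '' B ∪ {x}) =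
      (n + 2 - cycles ((· + 1) ∘ restrictTo τ B ∘ Equiv.swap p u)
        - cycles ((· + 1) ∘ restrictTo τ Bᶜ)) / 2 := by
  have : NeZero (2 * n - 1) := ⟨by lia⟩
  have : Fact (1 < 2 * n) := ⟨by lia⟩
  rw [h.pdGenus_eq hn hu (h.1.apply_sub_one_add_one hx) huB,
    cycles_splice_comp_splice_of_apply_eq (add_left_injective 1) _ (sub_add_cancel p 1) hpu]

theorem pdGenus_eq_of_eq_add_one (hn : 0 < n) (h : IsInsertedDiagram n τ u φ x D)
    (hτ : Involutive τ) (hu : τ u = u) (hpu : p ≠ u) (hx : x = φ (τ p) + 1)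
    (hB : ∀ j ∈ B, τ j ∈ B) (hpB : p ∈ B) (huB : u ∈ B) :
    pdGenus n D (φ '' B ∪ {x}) =
      (n + 2 - cycles ((· + 1) ∘ restrictTo τ B ∘ Equiv.swap p u)
        - cycles ((· + 1) ∘ restrictTo τ Bᶜ)) / 2 := by
  rw [h.pdGenus_eq hn hu hx.symm huB, ← restrictTo_of_mem (f := τ) hpB,
    cycles_splice_apply_comp_splice _ (involutive_restrictTo hτ hB).injective hpu]

end IsInsertedDiagram

/-- For a set `A` of chords with `c ∈ A` and `c' ∈ A`, the partial duals satisfy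
`g_A(D₁) = g_A(D₄)` and `g_A(D₂) = g_A(D₃)`. -/
theorem pdGenus_eq_of_c_and_c' (n : ℕ) (hn : 2 ≤ n)
    (τ : ZMod (2 * n - 1) → ZMod (2 * n - 1)) (p q u : ZMod (2 * n - 1))
    (hτ : IsConfig n τ p q u)
    (φ₁ φ₂ φ₃ φ₄ : ZMod (2 * n - 1) → ZMod (2 * n))
    (x₁ x₂ x₃ x₄ : ZMod (2 * n))
    (D₁ D₂ D₃ D₄ : ZMod (2 * n) → ZMod (2 * n))
    (h₁ : IsInsertedDiagram n τ u φ₁ x₁ D₁) (hx₁ : x₁ + 1 = φ₁ p)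
    (h₂ : IsInsertedDiagram n τ u φ₂ x₂ D₂) (hx₂ : x₂ = φ₂ p + 1)
    (h₃ : IsInsertedDiagram n τ u φ₃ x₃ D₃) (hx₃ : x₃ + 1 = φ₃ q)
    (h₄ : IsInsertedDiagram n τ u φ₄ x₄ D₄) (hx₄ : x₄ = φ₄ q + 1)
    (B : Set (ZMod (2 * n - 1))) (hB : ∀ j ∈ B, τ j ∈ B)
    (hc : p ∈ B) (hc' : u ∈ B) :
    pdGenus n D₁ (φ₁ '' B ∪ {x₁}) = pdGenus n D₄ (φ₄ '' B ∪ {x₄}) ∧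
    pdGenus n D₂ (φ₂ '' B ∪ {x₂}) = pdGenus n D₃ (φ₃ '' B ∪ {x₃}) := by
  obtain ⟨hinv, hpq, hne, hu, -⟩ := hτ
  have hqp : τ q = p := hinv.eq_iff.mpr hpq.symm
  have hq : q ∈ B := hpq ▸ hB p hc
  have hpu : p ≠ u := by rintro rfl; exact hne (hu.symm.trans hpq)
  have hqu : q ≠ u := by rintro rfl; exact hne (hqp.symm.trans hu)
  have hn' : 0 < n := by lia
  constructor
  · rw [h₁.pdGenus_eq_of_add_one_eq hn' hu hpu hx₁ hc',
      h₄.pdGenus_eq_of_eq_add_one hn' hinv hu hpu (hpq ▸ hx₄) hB hc hc']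
  · rw [h₃.pdGenus_eq_of_add_one_eq hn' hu hqu hx₃ hc',
      h₂.pdGenus_eq_of_eq_add_one hn' hinv hu hqu (hqp ▸ hx₂) hB hq hc']
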